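/- arXiv:1506.08927 — 2 statements merged into one kernel-verified Lean document; each statement's English description precedes it below -/
import Mathlib

section
/- Assume 0 ≤ i < k < ℓ < j ≤ n. Then Hom(X_{i,j}, X_{k,ℓ}) ≠ 0 if and only if ε_k = − and ε_ℓ = +; and Hom(X_{k,ℓ}, X_{i,j}) ≠ 0 if and only if ε_k = + and ε_ℓ = −. -/
namespace ESPaper

/-- Source of arrow `a m` (between vertices `m` and `m+1`): `m` if `ε m = +` (true). -/
def asrc (ε : ℕ → Bool) (m : ℕ) : ℕ := if ε m then m else m + 1

/-- Target of arrow `a m`. -/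
def atgt (ε : ℕ → Bool) (m : ℕ) : ℕ := if ε m then m + 1 else m

/-- A representation of the type `A_n` quiver `Q_ε`: finite dimensional vector spaces at the
vertices `1, …, n` (the spaces at the remaining indices are required to be trivial, so that
the maps attached to indices outside `1, …, n-1` carry no information) together with a
linear map along each arrow `a m : asrc ε m → atgt ε m`, `1 ≤ m ≤ n-1`. -/
structure Rep (K : Type) [Field K] (n : ℕ) (ε : ℕ → Bool) : Type 1 where
  V : ℕ → Type
  [instAdd : ∀ m, AddCommGroup (V m)]
  [instMod : ∀ m, Module K (V m)]
  [instFin : ∀ m, FiniteDimensional K (V m)]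
  triv : ∀ m, m = 0 ∨ n < m → Subsingleton (V m)
  φ : ∀ m, V (asrc ε m) →ₗ[K] V (atgt ε m)

attribute [instance] Rep.instAdd Rep.instMod Rep.instFin

/-- A morphism of representations of `Q_ε`. -/
structure RepHom {K : Type} [Field K] {n : ℕ} {ε : ℕ → Bool} (A B : Rep K n ε) where
  app : ∀ m, A.V m →ₗ[K] B.V m
  comm : ∀ m, (app (atgt ε m)).comp (A.φ m) = (B.φ m).comp (app (asrc ε m))

/-- Vertex space of the indecomposable `X_{i,j}` (for `0 ≤ i < j ≤ n`): `K` at the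
vertices `i+1, …, j` and `0` elsewhere. -/
def XV (K : Type) [Field K] (n i j m : ℕ) : Submodule K K :=
  if i + 1 ≤ m ∧ m ≤ j ∧ m ≤ n then ⊤ else ⊥

/-- Arrow map of the indecomposable `X_{i,j}`: the identity whenever both endpoints of the
arrow lie in the support, and zero otherwise. -/
def Xφ (K : Type) [Field K] (n : ℕ) (ε : ℕ → Bool) (i j m : ℕ) :
    XV K n i j (asrc ε m) →ₗ[K] XV K n i j (atgt ε m) :=
  if h : i + 1 ≤ atgt ε m ∧ atgt ε m ≤ j ∧ atgt ε m ≤ n then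
    LinearMap.codRestrict _ (XV K n i j (asrc ε m)).subtype
      (fun x => by simp [XV, h.1, h.2.1, h.2.2])
  else 0

/-- The indecomposable representation `X_{i,j}` of `Q_ε`. -/
def Xrep (K : Type) [Field K] (n : ℕ) (ε : ℕ → Bool) (i j : ℕ) : Rep K n ε where
  V m := XV K n i j m
  instAdd _ := inferInstance
  instMod _ := inferInstance
  instFin _ := inferInstance
  triv m hm := by
    have hneg : ¬ (i + 1 ≤ m ∧ m ≤ j ∧ m ≤ n) := by omega
    have hbot : XV K n i j m = ⊥ := by unfold XV; rw [if_neg hneg]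
    show Subsingleton (XV K n i j m)
    rw [hbot]
    infer_instance
  φ m := Xφ K n ε i j m

variable {K : Type} [Field K]

/-- `Hom(A, B) = 0`. -/
def homZero {n : ℕ} {ε : ℕ → Bool} (A B : Rep K n ε) : Prop :=
  ∀ θ : RepHom A B, ∀ m, θ.app m = 0

/-- `Hom(A, B) ≠ 0`. -/
def homNonzero {n : ℕ} {ε : ℕ → Bool} (A B : Rep K n ε) : Prop :=
  ∃ θ : RepHom A B, ∃ m, θ.app m ≠ 0

/-- `0 → B → E → A → 0` is a short exact sequence. -/
def IsSES {n : ℕ} {ε : ℕ → Bool} {B E A : Rep K n ε}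
    (f : RepHom B E) (g : RepHom E A) : Prop :=
  (∀ m, Function.Injective (f.app m)) ∧ (∀ m, Function.Surjective (g.app m)) ∧
    (∀ m, LinearMap.range (f.app m) = LinearMap.ker (g.app m))

/-- The short exact sequence `0 → B → E → A → 0` splits. -/
def Splits {n : ℕ} {ε : ℕ → Bool} {E A : Rep K n ε} (g : RepHom E A) : Prop :=
  ∃ s : RepHom A E, ∀ m, (g.app m).comp (s.app m) = LinearMap.id

/-- `Ext¹(A, B) ≠ 0`: there is a nonsplit short exact sequence `0 → B → E → A → 0`. -/
def extNonzero {n : ℕ} {ε : ℕ → Bool} (A B : Rep K n ε) : Prop :=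
  ∃ (E : Rep K n ε) (f : RepHom B E) (g : RepHom E A), IsSES f g ∧ ¬ Splits g

/-- `Ext¹(A, B) = 0`. -/
def extZero {n : ℕ} {ε : ℕ → Bool} (A B : Rep K n ε) : Prop := ¬ extNonzero A B

/-- `(U, V)` is an exceptional pair: `Hom(V,U) = 0` and `Ext¹(V,U) = 0`. -/
def ExcPair {n : ℕ} {ε : ℕ → Bool} (U V : Rep K n ε) : Prop := homZero V U ∧ extZero V U

/-!
The vertex spaces of `X_{a,b}` and `X_{c,d}` are at most one-dimensional, so a morphism
`X_{a,b} → X_{c,d}` is a family of scalars supported on the intersection of the two intervals.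
Commutativity along an arrow inside the intersection makes this family constant there, and
commutativity along an arrow across an end of the intersection either holds automatically or
forces the constant to vanish, depending on the direction of the arrow. Hence a nonzero morphism
exists exactly when the intersection is nonempty, every arrow between it and the rest of `X_{a,b}`
points out of it, and every arrow between it and the rest of `X_{c,d}` points into it.
-/

open Set

section IntervalRepresentation

variable {n : ℕ} {ε : ℕ → Bool} {i j m : ℕ}

lemma mem_XV (hj : j ≤ n) (hm : m ∈ Ioc i j) (x : K) : x ∈ XV K n i j m := by
  rw [XV, if_pos ⟨hm.1, hm.2, hm.2.trans hj⟩]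
  exact Submodule.mem_top

lemma XV_eq_bot (hm : m ∉ Ioc i j) : XV K n i j m = ⊥ :=
  if_neg fun h => hm ⟨h.1, h.2.1⟩

lemma coe_XV_eq_zero (hm : m ∉ Ioc i j) (x : XV K n i j m) : (x : K) = 0 :=
  (Submodule.mem_bot K).mp ((XV_eq_bot hm).le x.2)

lemma coe_Xφ (hj : j ≤ n) (hm : atgt ε m ∈ Ioc i j) (x : XV K n i j (asrc ε m)) :
    (Xφ K n ε i j m x : K) = x := by
  rw [Xφ, dif_pos ⟨hm.1, hm.2, hm.2.trans hj⟩]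
  rfl

lemma coe_Xφ_mul (hj : j ≤ n) {s : K} (hs : s ≠ 0 → atgt ε m ∈ Ioc i j)
    (x : XV K n i j (asrc ε m)) : (Xφ K n ε i j m x : K) * s = x * s := by
  rcases eq_or_ne s 0 with rfl | hs0
  · simp only [mul_zero]
  · rw [coe_Xφ hj (hs hs0)]

end IntervalRepresentation

/-- The families of scalars `u` that describe morphisms `X_{a,b} → X_{c,d}`, the component at the
vertex `m` being multiplication by `u m`. The support condition makes `u` unique: it is `0` at
vertices where one of the two spaces vanishes. -/
structure IsHomScalars {R : Type*} [Zero R] (ε : ℕ → Bool) (a b c d : ℕ) (u : ℕ → R) : Prop where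
  mem_of_ne_zero : ∀ {m}, u m ≠ 0 → m ∈ Ioc a b ∩ Ioc c d
  tgt_eq_src : ∀ {m}, asrc ε m ∈ Ioc a b → atgt ε m ∈ Ioc c d → u (atgt ε m) = u (asrc ε m)

section Morphisms

variable {n : ℕ} {ε : ℕ → Bool} {a b c d : ℕ}

lemma exists_scalar_of_linearMap {m : ℕ} (f : XV K n a b m →ₗ[K] XV K n c d m) :
    ∃ s : K, (s ≠ 0 → m ∈ Ioc a b ∩ Ioc c d) ∧ ∀ x, (f x : K) = x * s := by
  by_cases hm : m ∈ Ioc a b ∩ Ioc c d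
  · obtain ⟨g, hg⟩ := ((XV K n c d m).subtype ∘ₗ f).exists_extend
    refine ⟨g 1, fun _ => hm, fun x => ?_⟩
    calc (f x : K) = g x := (LinearMap.congr_fun hg x).symm
      _ = g ((x : K) • 1) := by rw [smul_eq_mul, mul_one]
      _ = x * g 1 := g.map_smul _ _
  · refine ⟨0, fun h => absurd rfl h, fun x => ?_⟩
    rw [mul_zero]
    by_cases hab : m ∈ Ioc a b
    · exact coe_XV_eq_zero (fun hcd => hm ⟨hab, hcd⟩) _
    · rw [show x = 0 from Subtype.ext (coe_XV_eq_zero hab x), map_zero, ZeroMemClass.coe_zero]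

namespace RepHom

/-- The component at the vertex `m` of a morphism `X_{a,b} → X_{c,d}`, with its domain and codomain
displayed as subspaces of `K`. -/
def vertexMap (θ : RepHom (Xrep K n ε a b) (Xrep K n ε c d)) (m : ℕ) :
    XV K n a b m →ₗ[K] XV K n c d m :=
  θ.app m

lemma vertexMap_comm (θ : RepHom (Xrep K n ε a b) (Xrep K n ε c d)) (m : ℕ)
    (x : XV K n a b (asrc ε m)) :
    θ.vertexMap (atgt ε m) (Xφ K n ε a b m x) = Xφ K n ε c d m (θ.vertexMap (asrc ε m) x) :=
  LinearMap.congr_fun (θ.comm m) x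

lemma exists_isHomScalars (hb : b ≤ n) (hd : d ≤ n)
    (θ : RepHom (Xrep K n ε a b) (Xrep K n ε c d)) :
    ∃ u : ℕ → K, IsHomScalars ε a b c d u ∧
      ∀ m x, (θ.vertexMap m x : K) = x * u m := by
  choose u hmem happ using fun m => exists_scalar_of_linearMap (θ.vertexMap m)
  refine ⟨u, ⟨hmem _, fun {m} hsrc htgt => ?_⟩, happ⟩
  let one : XV K n a b (asrc ε m) := ⟨1, mem_XV hb hsrc 1⟩
  calc u (atgt ε m) = (one : K) * u (atgt ε m) := (one_mul _).symm
    _ = (Xφ K n ε a b m one : K) * u (atgt ε m) :=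
        (coe_Xφ_mul hb (fun h => (hmem _ h).1) one).symm
    _ = θ.vertexMap (atgt ε m) (Xφ K n ε a b m one) := (happ _ _).symm
    _ = Xφ K n ε c d m (θ.vertexMap (asrc ε m) one) := by rw [θ.vertexMap_comm]
    _ = θ.vertexMap (asrc ε m) one := coe_Xφ hd htgt _
    _ = (one : K) * u (asrc ε m) := happ _ _
    _ = u (asrc ε m) := one_mul _

end RepHom

namespace IsHomScalars

variable {u : ℕ → K}

lemma exists_repHom (hb : b ≤ n) (hd : d ≤ n) (hu : IsHomScalars ε a b c d u) :
    ∃ θ : RepHom (Xrep K n ε a b) (Xrep K n ε c d),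
      ∀ m x, (θ.vertexMap m x : K) = x * u m := by
  have mul_mem (m : ℕ) (x : XV K n a b m) : (x : K) * u m ∈ XV K n c d m := by
    rcases eq_or_ne (u m) 0 with h | h
    · rw [h, mul_zero]
      exact zero_mem _
    · exact mem_XV hd (hu.mem_of_ne_zero h).2 _
  let f (m : ℕ) : XV K n a b m →ₗ[K] XV K n c d m :=
    (LinearMap.mulRight K (u m) ∘ₗ (XV K n a b m).subtype).codRestrict _ (mul_mem m)
  have square (m : ℕ) (x : XV K n a b (asrc ε m)) :
      f (atgt ε m) (Xφ K n ε a b m x) = Xφ K n ε c d m (f (asrc ε m) x) := by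
    apply Subtype.ext
    by_cases htgt : atgt ε m ∈ Ioc c d
    · calc (Xφ K n ε a b m x : K) * u (atgt ε m) = x * u (atgt ε m) :=
            coe_Xφ_mul hb (fun h => (hu.mem_of_ne_zero h).1) x
        _ = x * u (asrc ε m) := by
            by_cases hsrc : asrc ε m ∈ Ioc a b
            · rw [hu.tgt_eq_src hsrc htgt]
            · rw [coe_XV_eq_zero hsrc x, zero_mul, zero_mul]
        _ = Xφ K n ε c d m (f (asrc ε m) x) := (coe_Xφ hd htgt (f (asrc ε m) x)).symm
    · rw [coe_XV_eq_zero htgt, coe_XV_eq_zero htgt]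
  exact ⟨⟨f, fun m => LinearMap.ext (square m)⟩, fun _ _ => rfl⟩

end IsHomScalars

lemma homNonzero_Xrep_iff_exists_isHomScalars (hb : b ≤ n) (hd : d ≤ n) :
    homNonzero (Xrep K n ε a b) (Xrep K n ε c d) ↔
      ∃ u : ℕ → K, IsHomScalars ε a b c d u ∧ ∃ m, u m ≠ 0 := by
  constructor
  · rintro ⟨θ, m, hθ⟩
    obtain ⟨u, hu, happ⟩ := θ.exists_isHomScalars hb hd
    refine ⟨u, hu, m, fun hum => hθ (LinearMap.ext fun x => Subtype.ext ?_)⟩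
    exact (happ m x).trans (by rw [hum, mul_zero]; rfl)
  · rintro ⟨u, hu, m, hum⟩
    obtain ⟨θ, happ⟩ := hu.exists_repHom hb hd
    refine ⟨θ, m, fun hθ => hum ?_⟩
    let one : XV K n a b m := ⟨1, mem_XV hb (hu.mem_of_ne_zero hum).1 1⟩
    calc u m = (one : K) * u m := (one_mul _).symm
      _ = θ.vertexMap m one := (happ m one).symm
      _ = 0 := congrArg Subtype.val (LinearMap.congr_fun hθ one)

end Morphisms

lemma eq_of_forall_succ_eq {α : Type*} {u : ℕ → α} {p q : ℕ}
    (hu : ∀ m ∈ Ioo p q, u (m + 1) = u m) {m : ℕ} (hm : m ∈ Ioc p q) : u m = u (p + 1) := by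
  obtain ⟨hpm, hmq⟩ := hm
  induction m, hpm using Nat.le_induction with
  | base => rfl
  | succ m hpm ih => exact (hu m ⟨hpm, hmq⟩).trans (ih (Nat.le_of_succ_le hmq))

namespace IsHomScalars

variable {R : Type*} [Zero R] {ε : ℕ → Bool} {a b c d : ℕ} {u : ℕ → R}

lemma succ_eq_of_true (hu : IsHomScalars ε a b c d u) {m : ℕ} (hε : ε m = true)
    (hm : m ∈ Ioc a b) (hm' : m + 1 ∈ Ioc c d) : u (m + 1) = u m := by
  have h := hu.tgt_eq_src (m := m)
  simp only [asrc, atgt, hε, if_true] at h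
  exact h hm hm'

lemma succ_eq_of_false (hu : IsHomScalars ε a b c d u) {m : ℕ} (hε : ε m = false)
    (hm : m ∈ Ioc c d) (hm' : m + 1 ∈ Ioc a b) : u (m + 1) = u m := by
  have h := hu.tgt_eq_src (m := m)
  simp only [asrc, atgt, hε, Bool.false_eq_true, if_false] at h
  exact (h hm' hm).symm

lemma ne_zero_of_mem (hu : IsHomScalars ε a b c d u) {m₀ m : ℕ} (hm₀ : u m₀ ≠ 0)
    (hm : m ∈ Ioc a b ∩ Ioc c d) : u m ≠ 0 := by
  have succ_eq (r : ℕ) (hr : r ∈ Ioo (max a c) (min b d)) : u (r + 1) = u r := by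
    simp only [mem_Ioo, max_lt_iff, lt_min_iff] at hr
    have hab : r ∈ Ioc a b ∧ r + 1 ∈ Ioc a b := by simp only [mem_Ioc]; omega
    have hcd : r ∈ Ioc c d ∧ r + 1 ∈ Ioc c d := by simp only [mem_Ioc]; omega
    cases hε : ε r
    · exact hu.succ_eq_of_false hε hcd.1 hab.2
    · exact hu.succ_eq_of_true hε hab.1 hcd.2
  have hm₀_mem := hu.mem_of_ne_zero hm₀
  rw [Ioc_inter_Ioc] at hm hm₀_mem
  rwa [eq_of_forall_succ_eq succ_eq hm, ← eq_of_forall_succ_eq succ_eq hm₀_mem]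

lemma signs_of_ne_zero (hu : IsHomScalars ε a b c d u) {m : ℕ} (hm : u m ≠ 0) :
    (a < c → ε c = false) ∧ (c < a → ε a = true) ∧ (b < d → ε b = false) ∧
      (d < b → ε d = true) := by
  have hmem := hu.mem_of_ne_zero hm
  simp only [mem_inter_iff, mem_Ioc] at hmem
  have ne_zero {r : ℕ} (hr : (a < r ∧ r ≤ b) ∧ c < r ∧ r ≤ d) : u r ≠ 0 :=
    hu.ne_zero_of_mem hm hr
  have eq_zero {r : ℕ} (hr : ¬((a < r ∧ r ≤ b) ∧ c < r ∧ r ≤ d)) : u r = 0 :=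
    not_not.mp (mt hu.mem_of_ne_zero hr)
  refine ⟨fun hac => ?_, fun hca => ?_, fun hbd => ?_, fun hdb => ?_⟩
  · refine Bool.eq_false_iff.mpr fun hε => ne_zero (r := c + 1) (by omega) ?_
    rw [hu.succ_eq_of_true hε ⟨hac, by omega⟩ ⟨by omega, by omega⟩, eq_zero (by omega)]
  · refine Bool.of_not_eq_false fun hε => ne_zero (r := a + 1) (by omega) ?_
    rw [hu.succ_eq_of_false hε ⟨hca, by omega⟩ ⟨by omega, by omega⟩, eq_zero (by omega)]
  · refine Bool.eq_false_iff.mpr fun hε => ne_zero (r := b) (by omega) ?_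
    rw [← hu.succ_eq_of_true hε ⟨by omega, le_rfl⟩ ⟨by omega, hbd⟩, eq_zero (by omega)]
  · refine Bool.of_not_eq_false fun hε => ne_zero (r := d) (by omega) ?_
    rw [← hu.succ_eq_of_false hε ⟨by omega, le_rfl⟩ ⟨by omega, hdb⟩, eq_zero (by omega)]

end IsHomScalars

lemma tgt_mem_iff_src_mem {ε : ℕ → Bool} {a b c d m : ℕ}
    (hac : a < c → ε c = false) (hca : c < a → ε a = true)
    (hbd : b < d → ε b = false) (hdb : d < b → ε d = true)
    (hsrc : asrc ε m ∈ Ioc a b) (htgt : atgt ε m ∈ Ioc c d) :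
    atgt ε m ∈ Ioc a b ↔ asrc ε m ∈ Ioc c d := by
  cases hε : ε m <;>
    simp only [asrc, atgt, hε, mem_Ioc, if_true, if_false, Bool.false_eq_true] at hsrc htgt ⊢
  · have hma : ¬(c < a ∧ m = a) := by
      rintro ⟨h, rfl⟩
      exact Bool.false_ne_true (hε.symm.trans (hca h))
    have hmd : ¬(d < b ∧ m = d) := by
      rintro ⟨h, rfl⟩
      exact Bool.false_ne_true (hε.symm.trans (hdb h))
    omega
  · have hmc : ¬(a < c ∧ m = c) := by
      rintro ⟨h, rfl⟩
      exact Bool.false_ne_true ((hac h).symm.trans hε)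
    have hmb : ¬(b < d ∧ m = b) := by
      rintro ⟨h, rfl⟩
      exact Bool.false_ne_true ((hbd h).symm.trans hε)
    omega

lemma isHomScalars_indicator {R : Type*} [Zero R] [One R] {ε : ℕ → Bool} {a b c d : ℕ}
    (hac : a < c → ε c = false) (hca : c < a → ε a = true)
    (hbd : b < d → ε b = false) (hdb : d < b → ε d = true) :
    IsHomScalars ε a b c d ((Ioc a b ∩ Ioc c d).indicator (1 : ℕ → R)) where
  mem_of_ne_zero := mem_of_indicator_ne_zero
  tgt_eq_src {m} hsrc htgt := by
    have hiff : atgt ε m ∈ Ioc a b ∩ Ioc c d ↔ asrc ε m ∈ Ioc a b ∩ Ioc c d := by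
      simp only [mem_inter_iff, hsrc, htgt, and_true, true_and,
        tgt_mem_iff_src_mem hac hca hbd hdb hsrc htgt]
    classical simp only [indicator_apply, hiff, Pi.one_apply]

theorem hom_nested_general {n : ℕ} {ε : ℕ → Bool} {a b c d : ℕ} (hb : b ≤ n) (hd : d ≤ n) :
    homNonzero (Xrep K n ε a b) (Xrep K n ε c d) ↔
      max a c < min b d ∧ (a < c → ε c = false) ∧ (c < a → ε a = true) ∧
        (b < d → ε b = false) ∧ (d < b → ε d = true) := by
  rw [homNonzero_Xrep_iff_exists_isHomScalars hb hd]
  constructor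
  · rintro ⟨u, hu, m, hm⟩
    have hmem := hu.mem_of_ne_zero hm
    rw [Ioc_inter_Ioc] at hmem
    exact ⟨hmem.1.trans_le hmem.2, hu.signs_of_ne_zero hm⟩
  · rintro ⟨hlt, hac, hca, hbd, hdb⟩
    refine ⟨_, isHomScalars_indicator hac hca hbd hdb, min b d, ?_⟩
    rw [Ioc_inter_Ioc, indicator_of_mem (right_mem_Ioc.mpr hlt)]
    exact one_ne_zero

/-- Lemma 3.10 (nested case), Hom part. -/
theorem hom_nested (K : Type) [Field K] (n : ℕ) (ε : ℕ → Bool) (i k l j : ℕ)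
    (h1 : i < k) (h2 : k < l) (h3 : l < j) (h4 : j ≤ n) :
    (homNonzero (Xrep K n ε i j) (Xrep K n ε k l) ↔ ε k = false ∧ ε l = true) ∧
    (homNonzero (Xrep K n ε k l) (Xrep K n ε i j) ↔ ε k = true ∧ ε l = false) := by
  have hl : l ≤ n := h3.le.trans h4
  rw [hom_nested_general h4 hl, hom_nested_general hl h4]
  simp [h1, h2, h3, h1.le, h3.le, h1.not_gt, h3.not_gt]

end ESPaper
end

section
/- Assume 0 ≤ i < k < j ≤ n. Then Hom(X_{i,k}, X_{i,j}) ≠ 0 if and only if ε_k = −; Hom(X_{i,j}, X_{i,k}) ≠ 0 if and only if ε_k = +; and Ext^1(X_{i,k}, X_{i,j}) = 0 and Ext^1(X_{i,j}, X_{i,k}) = 0. -/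
namespace ESPaper

variable {K : Type} [Field K]

/-!
For any two representations there is an exact sequence
`0 → Hom(A, B) → ∏ Hom(A_m, B_m) → ∏ Hom(A_{s(a)}, B_{t(a)}) → Ext¹(A, B) → 0`
whose middle map is `c ↦ φ_B ∘ c - c ∘ φ_A`. For interval representations a family of linear maps
is a family of scalars, and the middle map becomes `γ ↦ (γ_{s(a)} - γ_{t(a)})_a`, where only the
arrows `a` from the support of the first interval to the support of the second one count and `γ`
vanishes where the supports differ. With a common left endpoint the prescribed differences can
always be summed up from the right end of the overlap, so `Ext¹ = 0`; and a solution of the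
homogeneous equations is constant on the overlap, hence nonzero precisely when the arrow leaving
the overlap imposes no condition.
-/

section Coboundary

variable {n : ℕ} {ε : ℕ → Bool} {A B E : Rep K n ε}

/-- The linear map `c ↦ φ_B ∘ c - c ∘ φ_A` from families of linear maps at the vertices to families
of linear maps along the arrows. Its kernel is `Hom(A, B)` and its cokernel is `Ext¹(A, B)`. -/
def coboundary (A B : Rep K n ε) :
    (∀ m, A.V m →ₗ[K] B.V m) →ₗ[K] ∀ m, A.V (asrc ε m) →ₗ[K] B.V (atgt ε m) where
  toFun c m := B.φ m ∘ₗ c (asrc ε m) - c (atgt ε m) ∘ₗ A.φ m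
  map_add' c c' := by
    funext m
    simp only [Pi.add_apply, LinearMap.comp_add, LinearMap.add_comp]
    abel
  map_smul' t c := by
    funext m
    simp only [Pi.smul_apply, LinearMap.comp_smul, LinearMap.smul_comp, smul_sub, RingHom.id_apply]

theorem coboundary_apply (c : ∀ m, A.V m →ₗ[K] B.V m) (m : ℕ) :
    coboundary A B c m = B.φ m ∘ₗ c (asrc ε m) - c (atgt ε m) ∘ₗ A.φ m :=
  rfl

theorem coboundary_eq_zero_iff (c : ∀ m, A.V m →ₗ[K] B.V m) :
    coboundary A B c = 0 ↔ ∀ m, c (atgt ε m) ∘ₗ A.φ m = B.φ m ∘ₗ c (asrc ε m) := by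
  simp only [funext_iff, coboundary_apply, Pi.zero_apply, sub_eq_zero]
  exact forall_congr' fun _ => eq_comm

theorem coboundary_repHom_comp (f : RepHom B E) (c : ∀ m, A.V m →ₗ[K] B.V m) (m : ℕ) :
    coboundary A E (fun l => f.app l ∘ₗ c l) m = f.app (atgt ε m) ∘ₗ coboundary A B c m := by
  simp only [coboundary_apply, LinearMap.comp_sub, ← LinearMap.comp_assoc, f.comm]

theorem coboundary_id : coboundary A A (fun _ => LinearMap.id) = 0 :=
  (coboundary_eq_zero_iff _).2 fun _ => rfl

theorem exists_comp_eq_of_range_le {U V W : Type*} [AddCommGroup U] [Module K U]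
    [AddCommGroup V] [Module K V] [AddCommGroup W] [Module K W] (f : V →ₗ[K] W) (h : U →ₗ[K] W)
    (hle : LinearMap.range h ≤ LinearMap.range f) : ∃ d : U →ₗ[K] V, f ∘ₗ d = h := by
  obtain ⟨d, hd⟩ := Module.projective_lifting_property f.rangeRestrict
    (h.codRestrict (LinearMap.range f) fun x => hle ⟨x, rfl⟩) f.surjective_rangeRestrict
  exact ⟨d, LinearMap.ext fun x => congrArg Subtype.val (LinearMap.congr_fun hd x)⟩

theorem extZero_of_coboundary_surjective (hsurj : Function.Surjective (coboundary A B)) :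
    extZero A B := by
  rintro ⟨E, f, g, ⟨-, hg, hfg⟩, hsplit⟩
  choose σ hσ using fun m =>
    (g.app m).exists_rightInverse_of_surjective (LinearMap.range_eq_top.2 (hg m))
  have range_le : ∀ m, LinearMap.range (coboundary A E σ m) ≤ LinearMap.range (f.app _) := by
    intro m
    rw [hfg, LinearMap.range_le_ker_iff, ← coboundary_repHom_comp]
    simp only [hσ, coboundary_id, Pi.zero_apply]
  choose d hd using fun m => exists_comp_eq_of_range_le _ _ (range_le m)
  obtain ⟨c, rfl⟩ := hsurj d
  -- `σ - f ∘ c` is still a vertexwise section, and now its coboundary vanishes.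
  have comm : coboundary A E (σ - fun m => f.app m ∘ₗ c m) = 0 := by
    funext m
    rw [map_sub, Pi.sub_apply, coboundary_repHom_comp, hd, sub_self, Pi.zero_apply]
  refine hsplit ⟨⟨_, (coboundary_eq_zero_iff _).1 comm⟩, fun m => ?_⟩
  have gf : g.app m ∘ₗ f.app m = 0 := LinearMap.range_le_ker_iff.1 (hfg m).le
  change g.app m ∘ₗ (σ m - f.app m ∘ₗ c m) = LinearMap.id
  rw [LinearMap.comp_sub, hσ, ← LinearMap.comp_assoc, gf, LinearMap.zero_comp, sub_zero]

end Coboundary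

section InclusionOrZero

variable {U V W : Submodule K K}

open Classical in
/-- The inclusion `U → W` of subspaces of `K` if `U ≤ W`, and zero otherwise. As such a subspace is
`⊥` or `⊤`, this is the identity of `K` when `U = W = ⊤` and zero in all other cases. -/
noncomputable def inclusionOrZero (U W : Submodule K K) : U →ₗ[K] W :=
  if h : U ≤ W then Submodule.inclusion h else 0

theorem eq_top_and_eq_top_or_eq_bot (U W : Submodule K K) :
    (U = ⊤ ∧ W = ⊤) ∨ (U = ⊥ ∨ W = ⊥) := by
  rcases eq_bot_or_eq_top U with hU | hU <;> rcases eq_bot_or_eq_top W with hW | hW <;> tauto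

theorem linearMap_eq_of_eq_bot (h : U = ⊥ ∨ W = ⊥) (f g : U →ₗ[K] W) : f = g := by
  rcases h with rfl | rfl <;> exact Subsingleton.elim f g

theorem coe_inclusionOrZero_apply (hW : W = ⊤) (x : U) : (inclusionOrZero U W x : K) = x := by
  rw [inclusionOrZero, dif_pos (hW ▸ le_top), Submodule.coe_inclusion]

theorem inclusionOrZero_ne_zero_iff : inclusionOrZero U W ≠ 0 ↔ U = ⊤ ∧ W = ⊤ := by
  constructor
  · intro h
    exact (eq_top_and_eq_top_or_eq_bot U W).resolve_right
      fun hbot => h (linearMap_eq_of_eq_bot hbot _ _)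
  · rintro ⟨hU, hW⟩ h
    have zero_eq_one := coe_inclusionOrZero_apply hW (⟨1, hU ▸ Submodule.mem_top⟩ : U)
    rw [h, LinearMap.zero_apply, ZeroMemClass.coe_zero] at zero_eq_one
    exact zero_ne_one zero_eq_one

theorem exists_eq_smul_inclusionOrZero (f : U →ₗ[K] W) :
    ∃ t : K, f = t • inclusionOrZero U W ∧ (t ≠ 0 → U = ⊤ ∧ W = ⊤) := by
  rcases eq_top_and_eq_top_or_eq_bot U W with ⟨hU, hW⟩ | hbot
  · let one : U := ⟨1, hU ▸ Submodule.mem_top⟩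
    refine ⟨f one, LinearMap.ext fun x => Subtype.ext ?_, fun _ => ⟨hU, hW⟩⟩
    have hx : x = (x : K) • one := Subtype.ext (mul_one _).symm
    calc (f x : K) = x * f one := by rw [hx, map_smul, ← hx, Submodule.coe_smul, smul_eq_mul]
      _ = f one * inclusionOrZero U W x := by rw [coe_inclusionOrZero_apply hW, mul_comm]
  · exact ⟨0, linearMap_eq_of_eq_bot hbot _ _, fun h => absurd rfl h⟩

theorem smul_inclusionOrZero_comp (t : K) (h : U = ⊤ → W = ⊤ → V ≠ ⊤ → t = 0) :
    t • (inclusionOrZero V W ∘ₗ inclusionOrZero U V) = t • inclusionOrZero U W := by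
  rcases eq_top_and_eq_top_or_eq_bot U W with ⟨hU, hW⟩ | hbot
  · by_cases hV : V = ⊤
    · congr 1
      refine LinearMap.ext fun x => Subtype.ext ?_
      rw [LinearMap.comp_apply, coe_inclusionOrZero_apply hW, coe_inclusionOrZero_apply hV,
        coe_inclusionOrZero_apply hW]
    · rw [h hU hW hV, zero_smul, zero_smul]
  · exact linearMap_eq_of_eq_bot hbot _ _

end InclusionOrZero

section Interval

variable {n : ℕ} {ε : ℕ → Bool} {i j i₁ j₁ i₂ j₂ l m r : ℕ}

/-- The set of vertices at which the representation `X_{i,j}` of the quiver with vertices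
`1, …, n` is nonzero. -/
def supp (n i j : ℕ) : Set ℕ := Set.Ioc i (min j n)

theorem mem_supp : m ∈ supp n i j ↔ i < m ∧ m ≤ j ∧ m ≤ n := by
  rw [supp, Set.mem_Ioc, le_min_iff]

theorem XV_eq_top_iff : XV K n i j m = ⊤ ↔ m ∈ supp n i j := by
  rw [mem_supp, XV, ite_eq_left_iff]
  simp

/-- The linear map from `X_{i,j}` at the vertex `l` to `X_{i₁,j₁}` at the vertex `m` which is the
identity of `K` if both spaces are `K`; otherwise it is zero. -/
noncomputable def unitMap (K : Type) [Field K] (n : ℕ) (ε : ℕ → Bool) (i j i₁ j₁ l m : ℕ) :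
    (Xrep K n ε i j).V l →ₗ[K] (Xrep K n ε i₁ j₁).V m :=
  inclusionOrZero (XV K n i j l) (XV K n i₁ j₁ m)

theorem unitMap_ne_zero_iff :
    unitMap K n ε i j i₁ j₁ l m ≠ 0 ↔ l ∈ supp n i j ∧ m ∈ supp n i₁ j₁ := by
  rw [← XV_eq_top_iff (K := K), ← XV_eq_top_iff (K := K)]
  exact inclusionOrZero_ne_zero_iff

theorem smul_unitMap_eq_zero_iff {t : K} :
    t • unitMap K n ε i j i₁ j₁ l m = 0 ↔ (l ∈ supp n i j → m ∈ supp n i₁ j₁ → t = 0) := by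
  rw [smul_eq_zero, or_iff_not_imp_right, ← ne_eq, unitMap_ne_zero_iff, and_imp]

theorem exists_eq_smul_unitMap (f : (Xrep K n ε i j).V l →ₗ[K] (Xrep K n ε i₁ j₁).V m) :
    ∃ t : K, f = t • unitMap K n ε i j i₁ j₁ l m ∧
      (t ≠ 0 → l ∈ supp n i j ∧ m ∈ supp n i₁ j₁) := by
  rw [← XV_eq_top_iff (K := K), ← XV_eq_top_iff (K := K)]
  exact exists_eq_smul_inclusionOrZero (U := XV K n i j l) (W := XV K n i₁ j₁ m) f

theorem smul_unitMap_comp_unitMap {t : K}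
    (h : l ∈ supp n i j → r ∈ supp n i₂ j₂ → m ∉ supp n i₁ j₁ → t = 0) :
    t • (unitMap K n ε i₁ j₁ i₂ j₂ m r ∘ₗ unitMap K n ε i j i₁ j₁ l m) =
      t • unitMap K n ε i j i₂ j₂ l r := by
  simp only [← XV_eq_top_iff (K := K)] at h
  exact smul_inclusionOrZero_comp t h

theorem Xrep_φ_eq_unitMap :
    (Xrep K n ε i j).φ m = unitMap K n ε i j i j (asrc ε m) (atgt ε m) := by
  refine LinearMap.ext fun x => ?_
  change Xφ K n ε i j m x = inclusionOrZero _ _ x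
  rw [Xφ]
  split_ifs with h
  · have htop : XV K n i j (atgt ε m) = ⊤ := XV_eq_top_iff.2 (mem_supp.2 h)
    exact Subtype.ext (coe_inclusionOrZero_apply htop x).symm
  · have hne : ¬ XV K n i j (atgt ε m) = ⊤ := fun htop => h (mem_supp.1 (XV_eq_top_iff.1 htop))
    have hbot := (eq_bot_or_eq_top _).resolve_right hne
    exact LinearMap.congr_fun (linearMap_eq_of_eq_bot (Or.inr hbot) _ _) x

theorem coboundary_smul_unitMap {γ : ℕ → K}
    (hγ : ∀ m ∈ symmDiff (supp n i j) (supp n i₁ j₁), γ m = 0) (m : ℕ) :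
    coboundary _ _ (fun l => γ l • unitMap K n ε i j i₁ j₁ l l) m =
      (γ (asrc ε m) - γ (atgt ε m)) • unitMap K n ε i j i₁ j₁ (asrc ε m) (atgt ε m) := by
  rw [coboundary_apply, Xrep_φ_eq_unitMap, Xrep_φ_eq_unitMap, LinearMap.comp_smul,
    LinearMap.smul_comp, sub_smul,
    smul_unitMap_comp_unitMap fun hs _ hs' => hγ _ (Or.inl ⟨hs, hs'⟩),
    smul_unitMap_comp_unitMap fun _ ht ht' => hγ _ (Or.inr ⟨ht, ht'⟩)]

theorem coboundary_smul_unitMap_eq_zero_iff {γ : ℕ → K}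
    (hγ : ∀ m ∈ symmDiff (supp n i j) (supp n i₁ j₁), γ m = 0) :
    coboundary _ _ (fun l => γ l • unitMap K n ε i j i₁ j₁ l l) = 0 ↔
      ∀ m, asrc ε m ∈ supp n i j → atgt ε m ∈ supp n i₁ j₁ → γ (asrc ε m) = γ (atgt ε m) := by
  simp only [funext_iff, coboundary_smul_unitMap hγ, Pi.zero_apply, smul_unitMap_eq_zero_iff,
    sub_eq_zero]

theorem homNonzero_Xrep_iff_exists_scalars :
    homNonzero (Xrep K n ε i j) (Xrep K n ε i₁ j₁) ↔
      ∃ γ : ℕ → K, (∀ m ∈ symmDiff (supp n i j) (supp n i₁ j₁), γ m = 0) ∧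
        (∃ m ∈ supp n i j ∩ supp n i₁ j₁, γ m ≠ 0) ∧
        ∀ m, asrc ε m ∈ supp n i j → atgt ε m ∈ supp n i₁ j₁ →
          γ (asrc ε m) = γ (atgt ε m) := by
  constructor
  · rintro ⟨θ, m, hm⟩
    choose γ hθ hγ using fun l => exists_eq_smul_unitMap (θ.app l)
    have vanish : ∀ l ∈ symmDiff (supp n i j) (supp n i₁ j₁), γ l = 0 := fun l hl =>
      not_not.1 fun h => hl.elim (fun h' => h'.2 (hγ l h).2) (fun h' => h'.2 (hγ l h).1)
    have hγm : γ m ≠ 0 := fun h => hm (by rw [hθ, h, zero_smul])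
    refine ⟨γ, vanish, ⟨m, hγ m hγm, hγm⟩, (coboundary_smul_unitMap_eq_zero_iff vanish).1 ?_⟩
    rw [← funext hθ, coboundary_eq_zero_iff]
    exact θ.comm
  · rintro ⟨γ, hγ, ⟨m, hm, hγm⟩, hconst⟩
    have comm := (coboundary_smul_unitMap_eq_zero_iff hγ).2 hconst
    exact ⟨⟨_, (coboundary_eq_zero_iff _).1 comm⟩, m,
      fun h => hγm (smul_unitMap_eq_zero_iff.1 h hm.1 hm.2)⟩

theorem extZero_Xrep_of_exists_scalars
    (h : ∀ δ : ℕ → K, ∃ γ : ℕ → K,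
      (∀ m ∈ symmDiff (supp n i j) (supp n i₁ j₁), γ m = 0) ∧
        ∀ m, asrc ε m ∈ supp n i j → atgt ε m ∈ supp n i₁ j₁ →
          γ (asrc ε m) - γ (atgt ε m) = δ m) :
    extZero (Xrep K n ε i j) (Xrep K n ε i₁ j₁) := by
  refine extZero_of_coboundary_surjective fun d => ?_
  choose δ hd _ using fun m => exists_eq_smul_unitMap (d m)
  obtain ⟨γ, hγ, hdiff⟩ := h δ
  refine ⟨fun l => γ l • unitMap K n ε i j i₁ j₁ l l, funext fun m => ?_⟩
  rw [coboundary_smul_unitMap hγ, hd, ← sub_eq_zero, ← sub_smul, smul_unitMap_eq_zero_iff]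
  exact fun hs ht => sub_eq_zero.2 (hdiff m hs ht)

end Interval

section CommonLeftEndpoint

variable {n i p q : ℕ} {ε : ℕ → Bool}

theorem asrc_atgt_cases (ε : ℕ → Bool) (m : ℕ) :
    (ε m = true ∧ asrc ε m = m ∧ atgt ε m = m + 1) ∨
      (ε m = false ∧ asrc ε m = m + 1 ∧ atgt ε m = m) := by
  cases h : ε m <;> simp [asrc, atgt, h]

theorem exists_asrc_sub_atgt_eq {M : Type*} [AddCommGroup M] (ε : ℕ → Bool) (δ : ℕ → M) (k : ℕ) :
    ∃ γ : ℕ → M, (∀ m, k < m → γ m = 0) ∧ ∀ m ≤ k, γ (asrc ε m) - γ (atgt ε m) = δ m := by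
  refine ⟨fun m => ∑ l ∈ Finset.Ico m (k + 1), if ε l then δ l else -δ l, fun m hm => ?_,
    fun m hm => ?_⟩
  · exact Finset.sum_eq_zero fun l hl => absurd (Finset.mem_Ico.1 hl) (by omega)
  · have sum_succ := Finset.sum_eq_sum_Ico_succ_bot (Nat.lt_succ_of_le hm)
      fun l => if ε l then δ l else -δ l
    rcases asrc_atgt_cases ε m with ⟨hε, hs, ht⟩ | ⟨hε, hs, ht⟩ <;>
      simp [hs, ht, sum_succ, hε]

theorem extZero_Xrep_of_common_left (n : ℕ) (ε : ℕ → Bool) (i p q : ℕ) :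
    extZero (Xrep K n ε i p) (Xrep K n ε i q) := by
  refine extZero_Xrep_of_exists_scalars fun δ => ?_
  obtain ⟨γ, hγ, hdiff⟩ := exists_asrc_sub_atgt_eq ε δ (min p q)
  refine ⟨γ, fun m hm => hγ m ?_, fun m hs ht => hdiff m ?_⟩
  · simp only [Set.mem_symmDiff, mem_supp] at hm
    omega
  · rw [mem_supp] at hs ht
    have := asrc_atgt_cases ε m
    omega

theorem eq_zero_of_eq_succ_of_right_eq_zero {M : Type*} [Zero M] {τ : ℕ → M} {i k : ℕ}
    (hstep : ∀ m, i < m → m < k → τ m = τ (m + 1)) (hk : τ k = 0) {m : ℕ} (him : i < m)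
    (hmk : m ≤ k) : τ m = 0 := by
  induction hmk using Nat.decreasingInduction with
  | self => exact hk
  | of_succ m hmk ih => rw [hstep m him hmk, ih (by omega)]

theorem asrc_mem_supp_and_atgt_mem_supp_iff (hn : min p q < n) (hpq : p ≠ q) (m : ℕ) :
    asrc ε m ∈ supp n i p ∧ atgt ε m ∈ supp n i q ↔
      i < m ∧ (m < min p q ∨ m = min p q ∧ (ε m = true ↔ p < q)) := by
  rw [mem_supp, mem_supp]
  rcases asrc_atgt_cases ε m with ⟨hε, hs, ht⟩ | ⟨hε, hs, ht⟩ <;>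
    simp only [hε, hs, ht, true_iff, Bool.false_eq_true, false_iff] <;> omega

theorem apply_asrc_eq_apply_atgt_iff {M : Type*} (γ : ℕ → M) (m : ℕ) :
    γ (asrc ε m) = γ (atgt ε m) ↔ γ m = γ (m + 1) := by
  rcases asrc_atgt_cases ε m with ⟨-, hs, ht⟩ | ⟨-, hs, ht⟩ <;> rw [hs, ht]
  exact eq_comm

theorem homNonzero_Xrep_iff_of_common_left (hi : i < min p q) (hn : min p q < n) (hpq : p ≠ q) :
    homNonzero (Xrep K n ε i p) (Xrep K n ε i q) ↔ (ε (min p q) = true ↔ q < p) := by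
  have lt_iff : q < p ↔ ¬ p < q := by omega
  simp only [homNonzero_Xrep_iff_exists_scalars, ← and_imp, Set.mem_symmDiff, Set.mem_inter_iff,
    asrc_mem_supp_and_atgt_mem_supp_iff hn hpq, apply_asrc_eq_apply_atgt_iff]
  simp only [mem_supp]
  constructor
  · rintro ⟨γ, hγ, ⟨m, hm, hγm⟩, hconst⟩
    by_contra hε
    have step : ∀ l, i < l → l < min p q → γ l = γ (l + 1) :=
      fun l hil hlk => hconst l ⟨hil, Or.inl hlk⟩
    have hk : γ (min p q) = 0 :=
      (hconst _ ⟨hi, Or.inr ⟨rfl, by tauto⟩⟩).trans (hγ _ (by omega))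
    exact hγm (eq_zero_of_eq_succ_of_right_eq_zero step hk (by omega) (by omega))
  · intro hε
    refine ⟨Set.indicator (Set.Iic (min p q)) 1, fun m hm => ?_, ⟨min p q, by omega, ?_⟩, ?_⟩
    · exact Set.indicator_of_notMem (by rw [Set.mem_Iic]; omega) _
    · simp
    · rintro m ⟨-, hmk | ⟨rfl, hε'⟩⟩
      · rw [Set.indicator_of_mem (Set.mem_Iic.2 hmk.le), Set.indicator_of_mem (Set.mem_Iic.2 hmk)]
        rfl
      · tauto

end CommonLeftEndpoint

/-- Lemma 3.11 iv)–vi): representations sharing the left endpoint `i`. -/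
theorem shared_left_endpoint (K : Type) [Field K] (n : ℕ) (ε : ℕ → Bool) (i k j : ℕ)
    (h1 : i < k) (h2 : k < j) (h3 : j ≤ n) :
    (homNonzero (Xrep K n ε i k) (Xrep K n ε i j) ↔ ε k = false) ∧
    (homNonzero (Xrep K n ε i j) (Xrep K n ε i k) ↔ ε k = true) ∧
    extZero (Xrep K n ε i k) (Xrep K n ε i j) ∧
    extZero (Xrep K n ε i j) (Xrep K n ε i k) := by
  have min_kj : min k j = k := min_eq_left h2.le
  have min_jk : min j k = k := min_eq_right h2.le
  refine ⟨?_, ?_, extZero_Xrep_of_common_left n ε i k j, extZero_Xrep_of_common_left n ε i j k⟩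
  · rw [homNonzero_Xrep_iff_of_common_left (by omega) (by omega) h2.ne, min_kj]
    simp only [h2.not_gt, iff_false, Bool.not_eq_true]
  · rw [homNonzero_Xrep_iff_of_common_left (by omega) (by omega) h2.ne', min_jk]
    exact iff_true_right h2

end ESPaper
end
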